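/- arXiv:2005.06207 — 3 statements merged into one kernel-verified Lean document; each statement's English description precedes it below -/
import Mathlib

section
/- Let x⋆ ∈ dom(G) and Λ := supp(x⋆). Then 0 ∈ ∂̂ι_C(x⋆) + 2Bx⋆ − 2G(x⋆)·Ax⋆ (i.e., x⋆ is a critical point of G) if and only if one of the following holds: (i) |Λ| < r and Bx⋆ = G(x⋆)·Ax⋆ (x⋆ is a unit generalized eigenvector of the pair (A,B) with generalized eigenvalue 1/G(x⋆)); (ii) |Λ| = r and B_Λ·x⋆_Λ = G(x⋆)·A_Λ·x⋆_Λ (x⋆_Λ is a unit generalized eigenvector of the pair (A_Λ, B_Λ)). -/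
open Filter Topology
open scoped RealInnerProductSpace

noncomputable section

/-- The Fréchet subdifferential of an extended-real-valued function `φ` at `x`:
the set of `y` with `liminf_{z→x, z≠x} (φ z − φ x − ⟨y, z−x⟩)/‖z−x‖ ≥ 0`,
empty when `φ x = +∞`. -/
def fsub {n : ℕ} (φ : EuclideanSpace ℝ (Fin n) → EReal) (x : EuclideanSpace ℝ (Fin n)) :
    Set (EuclideanSpace ℝ (Fin n)) :=
  {y | φ x ≠ ⊤ ∧
    0 ≤ liminf (fun z => (φ z - φ x - ((⟪y, z - x⟫ : ℝ) : EReal)) / ((‖z - x‖ : ℝ) : EReal))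
      (𝓝[≠] x)}

/-- The limiting (Mordukhovich) subdifferential. -/
def lsub {n : ℕ} (φ : EuclideanSpace ℝ (Fin n) → EReal) (x : EuclideanSpace ℝ (Fin n)) :
    Set (EuclideanSpace ℝ (Fin n)) :=
  {y | ∃ u : ℕ → EuclideanSpace ℝ (Fin n), ∃ v : ℕ → EuclideanSpace ℝ (Fin n),
      Tendsto u atTop (𝓝 x) ∧ Tendsto (fun k => φ (u k)) atTop (𝓝 (φ x)) ∧
      (∀ k, v k ∈ fsub φ (u k)) ∧ Tendsto v atTop (𝓝 y)}

/-- The subdifferential of a convex real-valued function. -/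
def csub {n : ℕ} (g : EuclideanSpace ℝ (Fin n) → ℝ) (x : EuclideanSpace ℝ (Fin n)) :
    Set (EuclideanSpace ℝ (Fin n)) :=
  {y | ∀ z, g x + ⟪y, z - x⟫ ≤ g z}

/-- The (possibly set-valued) proximity operator of a proper lsc extended-real-valued
function `ψ` at `u`. -/
def proxSet {n : ℕ} (ψ : EuclideanSpace ℝ (Fin n) → EReal) (u : EuclideanSpace ℝ (Fin n)) :
    Set (EuclideanSpace ℝ (Fin n)) :=
  {y | ∀ z, ψ y + ((‖y - u‖ ^ 2 / 2 : ℝ) : EReal) ≤ ψ z + ((‖z - u‖ ^ 2 / 2 : ℝ) : EReal)}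

/-- The fractional objective `F = (f+h)/g` on `Ω ∩ dom f`, `+∞` elsewhere. -/
def Ffrac {n : ℕ} (f : EuclideanSpace ℝ (Fin n) → EReal) (g h : EuclideanSpace ℝ (Fin n) → ℝ) :
    EuclideanSpace ℝ (Fin n) → EReal :=
  fun x => if g x ≠ 0 ∧ f x ≠ ⊤ then ((((f x).toReal + h x) / g x : ℝ) : EReal) else ⊤

/-- The support of a vector, as a finset. -/
def suppF {n : ℕ} (x : EuclideanSpace ℝ (Fin n)) : Finset (Fin n) :=
  Finset.univ.filter (fun i => x i ≠ 0)

/-- The sparse unit sphere C = {x : ℝⁿ | ‖x‖₀ ≤ r, ‖x‖₂ = 1}. -/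
def sphC (n r : ℕ) : Set (EuclideanSpace ℝ (Fin n)) :=
  {x | (suppF x).card ≤ r ∧ ‖x‖ = 1}

open Classical in
/-- The indicator function of C, with values in EReal. -/
def indC (n r : ℕ) : EuclideanSpace ℝ (Fin n) → EReal :=
  fun x => if x ∈ sphC n r then 0 else ⊤

/-- Matrix-vector product, as a map on Euclidean space. -/
def mvec {n : ℕ} (M : Matrix (Fin n) (Fin n) ℝ) (x : EuclideanSpace ℝ (Fin n)) :
    EuclideanSpace ℝ (Fin n) :=
  (EuclideanSpace.equiv (Fin n) ℝ).symm (M.mulVec (EuclideanSpace.equiv (Fin n) ℝ x))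

/-- The quadratic form xᵀMx. -/
def qf {n : ℕ} (M : Matrix (Fin n) (Fin n) ℝ) (x : EuclideanSpace ℝ (Fin n)) : ℝ :=
  ∑ i, ∑ j, x i * M i j * x j

open Classical in
/-- The objective G of the sparse generalized eigenvalue problem (formulation (6.4)). -/
def Gfun {n : ℕ} (r : ℕ) (A B : Matrix (Fin n) (Fin n) ℝ) :
    EuclideanSpace ℝ (Fin n) → EReal :=
  fun x => if x ∈ sphC n r ∧ qf A x ≠ 0 then ((qf B x / qf A x : ℝ) : EReal) else ⊤

/-!
The Fréchet subdifferential of an indicator function `ι_C` is the Fréchet normal cone of `C`, and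
normal vectors pair nonpositively with tangent ones. If `V` is a subspace through a unit vector `x`,
normalizing `x + t d` shows that every `d ∈ V` orthogonal to `x` is tangent to `V ∩ sphere` at `x`;
hence a normal vector that is also orthogonal to `x` is orthogonal to all of `V`.

For a set `S` of at most `r` coordinates, `C` contains the unit sphere of the coordinate subspace
`V_S`. If `x ∈ C` has fewer than `r` nonzero entries, every coordinate lies in such an `S`
containing `supp x`, so a normal vector orthogonal to `x` vanishes. If `x` has exactly `r` nonzero
entries, `C` coincides near `x` with the unit sphere of `V_{supp x}`, so the normal vectors
orthogonal to `x` are those vanishing on `supp x`. Both cases apply to `2 c A x - 2 B x` with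
`c = xᵀBx / xᵀAx`, which is orthogonal to `x`.
-/

section NormalCone

lemma mem_posTangentConeAt_of_hasDerivAt {E : Type*} [NormedAddCommGroup E] [NormedSpace ℝ E]
    {s : Set E} {γ : ℝ → E} {d : E}
    (hγ : HasDerivAt γ d 0) (hmem : ∀ᶠ t in 𝓝[>] 0, γ t ∈ s) :
    d ∈ posTangentConeAt s (γ 0) := by
  refine mem_tangentConeAt_of_seq (𝓝[>] (0 : ℝ)) (fun t => (t⁻¹).toNNReal)
    (fun t => γ t - γ 0) ?_ (by simpa using hmem) ?_
  · have hcont : Tendsto γ (𝓝[>] 0) (𝓝 (γ 0)) :=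
      hγ.continuousAt.tendsto.mono_left nhdsWithin_le_nhds
    simpa using hcont.sub_const (γ 0)
  · refine hγ.tendsto_slope_zero_right.congr' ?_
    filter_upwards [self_mem_nhdsWithin] with t ht
    rw [NNReal.smul_def, Real.coe_toNNReal _ (inv_nonneg.2 (Set.mem_Ioi.1 ht).le), zero_add]

variable {E : Type*} [NormedAddCommGroup E] [InnerProductSpace ℝ E]

/-- The Fréchet normal cone of `s` at `x`: the vectors `y` with `⟪y, z - x⟫ ≤ o(‖z - x‖)` as
`z → x` in `s`. It describes the Fréchet subdifferential of the indicator function of `s`. -/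
def frechetNormalCone (s : Set E) (x : E) : Set E :=
  {y | ∀ ε : ℝ, 0 < ε → ∀ᶠ z in 𝓝[s] x, ⟪y, z - x⟫ ≤ ε * ‖z - x‖}

variable {s t : Set E} {x y d : E}

lemma frechetNormalCone_anti (hst : s ⊆ t) : frechetNormalCone t x ⊆ frechetNormalCone s x :=
  fun _ hy ε hε => nhdsWithin_mono x hst (hy ε hε)

lemma frechetNormalCone_congr (hst : s =ᶠ[𝓝 x] t) :
    frechetNormalCone s x = frechetNormalCone t x := by
  simp only [frechetNormalCone, nhdsWithin_eq_iff_eventuallyEq.2 hst]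

lemma inner_nonpos_of_mem_frechetNormalCone (hy : y ∈ frechetNormalCone s x)
    (hd : d ∈ posTangentConeAt s x) : ⟪y, d⟫ ≤ 0 := by
  obtain ⟨_, l, _, c, u, hu, hus, hcu⟩ := exists_fun_of_mem_tangentConeAt hd
  have tendsto_within : Tendsto (fun k => x + u k) l (𝓝[s] x) :=
    tendsto_nhdsWithin_iff.2 ⟨by simpa using hu.const_add x, hus⟩
  have inner_le : ∀ ε : ℝ, 0 < ε → ⟪y, d⟫ ≤ ε * ‖d‖ := by
    intro ε hε
    refine le_of_tendsto_of_tendsto (tendsto_const_nhds.inner hcu) (hcu.norm.const_mul ε) ?_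
    filter_upwards [tendsto_within.eventually (hy ε hε)] with k hk
    calc ⟪y, c k • u k⟫ = c k * ⟪y, u k⟫ := by rw [NNReal.smul_def, inner_smul_right]
      _ ≤ c k * (ε * ‖u k‖) := by gcongr; simpa using hk
      _ = ε * ‖c k • u k‖ := by rw [NNReal.smul_def, norm_smul, NNReal.norm_eq]; ring
  have lim_zero : Tendsto (fun ε : ℝ => ε * ‖d‖) (𝓝[>] 0) (𝓝 0) := by
    simpa using (continuous_mul_const ‖d‖).continuousWithinAt (s := Set.Ioi 0) (x := 0) |>.tendsto
  exact ge_of_tendsto lim_zero (eventually_mem_nhdsWithin.mono inner_le)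

end NormalCone

section UnitSphere

variable {E : Type*} [NormedAddCommGroup E] [InnerProductSpace ℝ E] {V : Submodule ℝ E} {x y d : E}

lemma hasDerivAt_normalize_add_smul (hx : ‖x‖ = 1) (hxd : ⟪x, d⟫ = 0) :
    HasDerivAt (fun t : ℝ => ‖x + t • d‖⁻¹ • (x + t • d)) d 0 := by
  have hline : HasDerivAt (fun t : ℝ => x + t • d) d 0 := by
    simpa using ((hasDerivAt_id (0 : ℝ)).smul_const d).const_add x
  have hnorm : HasDerivAt (fun t : ℝ => ‖x + t • d‖) 0 0 := by
    simpa [hx, hxd] using hline.norm_sq.sqrt (by simp [hx])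
  convert (hnorm.fun_inv (by simp [hx])).fun_smul hline using 1
  simp [hx]

lemma mem_posTangentConeAt_inter_sphere (hxV : x ∈ V) (hx : ‖x‖ = 1) (hdV : d ∈ V)
    (hxd : ⟪x, d⟫ = 0) : d ∈ posTangentConeAt (V ∩ Metric.sphere (0 : E) 1) x := by
  have hne : ∀ t : ℝ, x + t • d ≠ 0 := fun t h => by
    simpa [inner_add_right, inner_smul_right, hxd, hx] using congrArg (⟪x, ·⟫) h
  have hmem : ∀ t : ℝ, ‖x + t • d‖⁻¹ • (x + t • d) ∈ (V ∩ Metric.sphere (0 : E) 1 : Set E) :=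
    fun t => ⟨V.smul_mem _ (V.add_mem hxV (V.smul_mem t hdV)),
      by simpa using norm_smul_inv_norm (𝕜 := ℝ) (hne t)⟩
  simpa [hx] using
    mem_posTangentConeAt_of_hasDerivAt (hasDerivAt_normalize_add_smul hx hxd) (.of_forall hmem)

lemma mem_frechetNormalCone_inter_sphere_iff (hxV : x ∈ V) (hx : ‖x‖ = 1) (hyx : ⟪y, x⟫ = 0) :
    y ∈ frechetNormalCone (V ∩ Metric.sphere (0 : E) 1) x ↔ y ∈ Vᗮ := by
  rw [Submodule.mem_orthogonal']
  constructor
  · intro hy u hu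
    have hyd : ∀ d ∈ V, ⟪x, d⟫ = 0 → ⟪y, d⟫ ≤ 0 := fun d hdV hxd =>
      inner_nonpos_of_mem_frechetNormalCone hy (mem_posTangentConeAt_inter_sphere hxV hx hdV hxd)
    let w := u - ⟪x, u⟫ • x
    have hwV : w ∈ V := V.sub_mem hu (V.smul_mem _ hxV)
    have hxw : ⟪x, w⟫ = 0 := by simp [w, inner_sub_right, inner_smul_right, hx]
    have hyw : ⟪y, w⟫ = ⟪y, u⟫ := by simp [w, inner_sub_right, inner_smul_right, hyx]
    have hneg := hyd (-w) (V.neg_mem hwV) (by simp [hxw])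
    rw [inner_neg_right] at hneg
    linarith [hyd w hwV hxw]
  · intro hy ε hε
    filter_upwards [self_mem_nhdsWithin] with z hz
    rw [hy _ (V.sub_mem hz.1 hxV)]
    positivity

end UnitSphere

section Subdifferential

lemma zero_le_liminf_iff_forall_neg_le {α : Type*} {l : Filter α} {f : α → EReal} :
    0 ≤ liminf f l ↔ ∀ ε : ℝ, 0 < ε → ∀ᶠ a in l, ((-ε : ℝ) : EReal) ≤ f a := by
  rw [le_liminf_iff']
  constructor
  · intro h ε hε
    exact h _ (by exact_mod_cast neg_lt_zero.2 hε)
  · intro h b hb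
    obtain ⟨q, hbq, hq⟩ := EReal.lt_iff_exists_real_btwn.1 hb
    filter_upwards [h (-q) (neg_pos.2 (by exact_mod_cast hq))] with a ha
    exact hbq.le.trans (by simpa using ha)

variable {n : ℕ} {s : Set (EuclideanSpace ℝ (Fin n))} {x y z : EuclideanSpace ℝ (Fin n)}

open Classical in
/-- The indicator function of `s` in the sense of variational analysis, `0` on `s` and `+∞`
elsewhere. -/
def extIndicator (s : Set (EuclideanSpace ℝ (Fin n))) : EuclideanSpace ℝ (Fin n) → EReal :=
  fun z => if z ∈ s then 0 else ⊤

lemma neg_le_extIndicator_difference_quotient_iff (hx : x ∈ s) (hzx : z ≠ x) (ε : ℝ) :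
    ((-ε : ℝ) : EReal) ≤ (extIndicator s z - extIndicator s x - ((⟪y, z - x⟫ : ℝ) : EReal)) /
        ((‖z - x‖ : ℝ) : EReal) ↔
      (z ∈ s → ⟪y, z - x⟫ ≤ ε * ‖z - x‖) := by
  have hpos : 0 < ‖z - x‖ := norm_pos_iff.2 (sub_ne_zero.2 hzx)
  rw [EReal.le_div_iff_mul_le (by exact_mod_cast hpos) (EReal.coe_ne_top _)]
  by_cases hz : z ∈ s
  · simp only [extIndicator, hx, hz, if_true, sub_zero, zero_sub, forall_const]
    rw [← EReal.coe_mul, ← EReal.coe_neg, EReal.coe_le_coe_iff, neg_mul, neg_le_neg_iff]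
  · simp [extIndicator, hx, hz]

lemma fsub_extIndicator (hx : x ∈ s) : fsub (extIndicator s) x = frechetNormalCone s x := by
  ext y
  have hfin : extIndicator s x ≠ ⊤ := by simp [extIndicator, hx]
  have mem_iff_punctured : y ∈ fsub (extIndicator s) x ↔
      ∀ ε : ℝ, 0 < ε → ∀ᶠ z in 𝓝[≠] x, z ∈ s → ⟪y, z - x⟫ ≤ ε * ‖z - x‖ := by
    refine (and_iff_right hfin).trans (zero_le_liminf_iff_forall_neg_le.trans ?_)
    refine forall₂_congr fun ε _ => eventually_congr ?_
    filter_upwards [self_mem_nhdsWithin] with z hzx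
    exact neg_le_extIndicator_difference_quotient_iff hx hzx ε
  rw [mem_iff_punctured]
  refine forall₂_congr fun ε _ => ?_
  rw [eventually_nhdsWithin_iff, eventually_nhdsWithin_iff]
  refine eventually_congr (.of_forall fun z => ?_)
  rcases eq_or_ne z x with rfl | hzx <;> simp [*]

end Subdifferential

section SparseSphere

variable {n r : ℕ} {x y z : EuclideanSpace ℝ (Fin n)} {S : Finset (Fin n)}

lemma fsub_indC (hx : x ∈ sphC n r) :
    fsub (indC n r) x = frechetNormalCone (sphC n r) x :=
  fsub_extIndicator hx

lemma mem_suppF {i : Fin n} : i ∈ suppF x ↔ x i ≠ 0 := by simp [suppF]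

/-- The coordinate subspace of vectors vanishing outside `S`; the sparse sphere is the union of
the unit spheres of those with `S.card ≤ r`. -/
def coordSubspace (S : Finset (Fin n)) : Submodule ℝ (EuclideanSpace ℝ (Fin n)) where
  carrier := {z | ∀ i ∉ S, z i = 0}
  zero_mem' := by simp
  add_mem' ha hb i hi := by simp [ha i hi, hb i hi]
  smul_mem' c a ha i hi := by simp [ha i hi]

lemma mem_coordSubspace_iff_suppF_subset : z ∈ coordSubspace S ↔ suppF z ⊆ S :=
  forall_congr' fun i => by rw [mem_suppF, not_imp_comm]

lemma mem_orthogonal_coordSubspace_iff : y ∈ (coordSubspace S)ᗮ ↔ ∀ i ∈ S, y i = 0 := by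
  rw [Submodule.mem_orthogonal']
  constructor
  · intro hy i hi
    have hsingle : EuclideanSpace.single i (1 : ℝ) ∈ coordSubspace S := fun j hj => by
      simp [ne_of_mem_of_not_mem hi hj |>.symm]
    simpa [EuclideanSpace.inner_single_right] using hy _ hsingle
  · intro hy z hz
    rw [PiLp.inner_apply]
    refine Finset.sum_eq_zero fun i _ => ?_
    by_cases hi : i ∈ S
    · simp [hy i hi]
    · simp [hz i hi]

lemma coordSubspace_inter_sphere_subset_sphC (hS : S.card ≤ r) :
    (coordSubspace S ∩ Metric.sphere 0 1 : Set (EuclideanSpace ℝ (Fin n))) ⊆ sphC n r :=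
  fun _ hz => ⟨(Finset.card_le_card (mem_coordSubspace_iff_suppF_subset.1 hz.1)).trans hS,
    by simpa using hz.2⟩

lemma eventually_suppF_subset (x : EuclideanSpace ℝ (Fin n)) :
    ∀ᶠ z in 𝓝 x, suppF x ⊆ suppF z := by
  have hne : ∀ᶠ z in 𝓝 x, ∀ i ∈ suppF x, z i ≠ 0 := by
    rw [eventually_all_finset]
    intro i hi
    have hcont : Continuous fun z : EuclideanSpace ℝ (Fin n) => z i := by fun_prop
    exact hcont.continuousAt.eventually_ne (mem_suppF.1 hi)
  exact hne.mono fun z hz i hi => mem_suppF.2 (hz i hi)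

lemma sphC_eventuallyEq_of_card_eq (hcard : (suppF x).card = r) :
    sphC n r =ᶠ[𝓝 x] (coordSubspace (suppF x) ∩ Metric.sphere 0 1 : Set _) := by
  refine eventuallyEq_set.2 ((eventually_suppF_subset x).mono fun z hxz => ?_)
  refine ⟨fun hz => ⟨?_, by simpa using hz.2⟩,
    fun hz => coordSubspace_inter_sphere_subset_sphC hcard.le hz⟩
  have hsupp : suppF x = suppF z := Finset.eq_of_subset_of_card_le hxz (hz.1.trans hcard.ge)
  exact mem_coordSubspace_iff_suppF_subset.2 hsupp.ge

lemma mem_fsub_indC_iff_of_card_eq (hx : ‖x‖ = 1) (hcard : (suppF x).card = r)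
    (hyx : ⟪y, x⟫ = 0) : y ∈ fsub (indC n r) x ↔ ∀ i ∈ suppF x, y i = 0 := by
  have hxV : x ∈ coordSubspace (suppF x) := mem_coordSubspace_iff_suppF_subset.2 subset_rfl
  have hxC : x ∈ sphC n r := ⟨hcard.le, hx⟩
  rw [fsub_indC hxC, frechetNormalCone_congr (sphC_eventuallyEq_of_card_eq hcard),
    mem_frechetNormalCone_inter_sphere_iff hxV hx hyx, mem_orthogonal_coordSubspace_iff]

lemma mem_fsub_indC_iff_of_card_lt (hx : ‖x‖ = 1) (hcard : (suppF x).card < r)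
    (hyx : ⟪y, x⟫ = 0) : y ∈ fsub (indC n r) x ↔ y = 0 := by
  have hxC : x ∈ sphC n r := ⟨hcard.le, hx⟩
  rw [fsub_indC hxC]
  constructor
  · intro hy
    ext i
    let S := insert i (suppF x)
    have hxV : x ∈ coordSubspace S :=
      mem_coordSubspace_iff_suppF_subset.2 (Finset.subset_insert i _)
    have hS : S.card ≤ r := (Finset.card_insert_le _ _).trans hcard
    have hyV : y ∈ (coordSubspace S)ᗮ := (mem_frechetNormalCone_inter_sphere_iff hxV hx hyx).1
      (frechetNormalCone_anti (coordSubspace_inter_sphere_subset_sphC hS) hy)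
    exact mem_orthogonal_coordSubspace_iff.1 hyV i (Finset.mem_insert_self i _)
  · rintro rfl ε hε
    refine .of_forall fun z => ?_
    rw [inner_zero_left]
    positivity

end SparseSphere

section RayleighQuotient

variable {n r : ℕ} {A B : Matrix (Fin n) (Fin n) ℝ} {x : EuclideanSpace ℝ (Fin n)} {c : ℝ}

lemma mvec_apply_eq_sum_suppF (M : Matrix (Fin n) (Fin n) ℝ) (x : EuclideanSpace ℝ (Fin n))
    (i : Fin n) : mvec M x i = ∑ j ∈ suppF x, M i j * x j := by
  have hfull : mvec M x i = ∑ j, M i j * x j := rfl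
  rw [hfull]
  refine (Finset.sum_subset (Finset.subset_univ _) fun j _ hj => ?_).symm
  rw [not_not.1 (mt mem_suppF.2 hj), mul_zero]

lemma inner_mvec_self (M : Matrix (Fin n) (Fin n) ℝ) (x : EuclideanSpace ℝ (Fin n)) :
    ⟪mvec M x, x⟫ = qf M x := by
  simp [PiLp.inner_apply, qf, mvec, Matrix.mulVec, dotProduct, Finset.mul_sum, mul_assoc]

lemma inner_residual_self_eq_zero (hc : qf B x = c * qf A x) :
    ⟪(2 * c) • mvec A x - (2 : ℝ) • mvec B x, x⟫ = 0 := by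
  simp only [inner_sub_left, real_inner_smul_left, inner_mvec_self, hc]
  ring

lemma qf_eq_toReal_Gfun_mul_qf (hx : x ∈ sphC n r) (hA : qf A x ≠ 0) :
    qf B x = (Gfun r A B x).toReal * qf A x := by
  rw [Gfun, if_pos ⟨hx, hA⟩, EReal.toReal_coe, div_mul_cancel₀ _ hA]

end RayleighQuotient

theorem critical_points_of_sparse_generalized_eigenproblem_general
    {n r : ℕ} {A B : Matrix (Fin n) (Fin n) ℝ} {x : EuclideanSpace ℝ (Fin n)} {c : ℝ}
    (hx : x ∈ sphC n r) (hc : qf B x = c * qf A x) :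
    (∃ v ∈ fsub (indC n r) x, v + (2 : ℝ) • mvec B x - (2 * c) • mvec A x = 0) ↔
      (((suppF x).card < r ∧ mvec B x = c • mvec A x) ∨
        ((suppF x).card = r ∧ ∀ i ∈ suppF x,
          (∑ j ∈ suppF x, B i j * x j) = c * ∑ j ∈ suppF x, A i j * x j)) := by
  let y := (2 * c) • mvec A x - (2 : ℝ) • mvec B x
  have hyx : ⟪y, x⟫ = 0 := inner_residual_self_eq_zero hc
  have exists_iff : (∃ v ∈ fsub (indC n r) x, v + (2 : ℝ) • mvec B x - (2 * c) • mvec A x = 0) ↔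
      y ∈ fsub (indC n r) x := by
    simp only [add_sub_assoc, add_eq_zero_iff_eq_neg, neg_sub, exists_eq_right, y]
  have apply_eq_zero_iff : ∀ i, y i = 0 ↔ mvec B x i = c * mvec A x i := fun i => by
    simp only [y, PiLp.sub_apply, PiLp.smul_apply, smul_eq_mul]
    constructor <;> intro h <;> linarith
  rw [exists_iff]
  rcases hx.1.lt_or_eq with hlt | heq
  · have eq_zero_iff : y = 0 ↔ mvec B x = c • mvec A x := by
      rw [PiLp.ext_iff, PiLp.ext_iff]
      exact forall_congr' apply_eq_zero_iff
    simp only [mem_fsub_indC_iff_of_card_lt hx.2 hlt hyx, eq_zero_iff, hlt, hlt.ne, true_and,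
      false_and, or_false]
  · simp only [mem_fsub_indC_iff_of_card_eq hx.2 heq hyx, apply_eq_zero_iff,
      mvec_apply_eq_sum_suppF, heq, lt_irrefl, false_and, true_and, false_or]

/-- Proposition 6.2: characterization of critical points of G as (sub)generalized
eigenvectors of the pair (A,B). -/
theorem critical_points_of_sparse_generalized_eigenproblem
    {n : ℕ} (r : ℕ) (hr1 : 1 ≤ r) (hrn : r ≤ n)
    (A B : Matrix (Fin n) (Fin n) ℝ)
    (hA : A.PosSemidef) (hB : B.PosSemidef)
    (hBr : ∀ Λ : Finset (Fin n), Λ.card = r →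
      (B.submatrix (fun i : Λ => (i : Fin n)) (fun i : Λ => (i : Fin n))).PosDef)
    (xs : EuclideanSpace ℝ (Fin n)) (hxs : xs ∈ sphC n r ∧ qf A xs ≠ 0)
    (c : ℝ) (hc : c = (Gfun r A B xs).toReal) :
    (∃ v ∈ fsub (indC n r) xs,
        v + (2 : ℝ) • mvec B xs - (2 * c) • mvec A xs = 0) ↔
      (((suppF xs).card < r ∧ mvec B xs = c • mvec A xs) ∨
        ((suppF xs).card = r ∧ ∀ i ∈ suppF xs,
          (∑ j ∈ suppF xs, B i j * xs j) = c * ∑ j ∈ suppF xs, A i j * xs j)) := by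
  exact critical_points_of_sparse_generalized_eigenproblem_general hxs.1
    (hc ▸ qf_eq_toReal_Gfun_mul_qf hxs.1 hxs.2)
end
end

section
/- For x ∈ ℝⁿ let proj_C(x) denote the set of minimizers of z ↦ ‖z − x‖₂ over C, and let T_r(x) be the set of all y ∈ ℝⁿ for which there exists Λ ⊆ {1,…,n} with |Λ| = r such that min_{i∈Λ}|x_i| ≥ max_{i∉Λ}|x_i|, y_i = x_i for i ∈ Λ, and y_i = 0 for i ∉ Λ. Then for every x ≠ 0, every element of T_r(x) is nonzero and proj_C(x) = {y/‖y‖₂ : y ∈ T_r(x)}; and proj_C(0) = C. -/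
open Filter Topology
open scoped RealInnerProductSpace

noncomputable section

/-- The metric projection onto C (as a set of minimizers). -/
def projC {n : ℕ} (r : ℕ) (x : EuclideanSpace ℝ (Fin n)) :
    Set (EuclideanSpace ℝ (Fin n)) :=
  {z | z ∈ sphC n r ∧ ∀ w ∈ sphC n r, ‖z - x‖ ≤ ‖w - x‖}

/-- The hard-thresholding operator keeping the r largest entries in absolute value. -/
def Tr {n : ℕ} (r : ℕ) (x : EuclideanSpace ℝ (Fin n)) :
    Set (EuclideanSpace ℝ (Fin n)) :=
  {y | ∃ Λ : Finset (Fin n), Λ.card = r ∧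
    (∀ i ∈ Λ, ∀ j, j ∉ Λ → |x j| ≤ |x i|) ∧
    (∀ i ∈ Λ, y i = x i) ∧ ∀ i, i ∉ Λ → y i = 0}

/-!
On the unit sphere, minimizing `‖z - x‖` is maximizing `⟪z, x⟫`. If `z` is a unit vector supported
in `s`, then `⟪z, x⟫ = ⟪z, x_s⟫ ≤ ‖x_s‖` by Cauchy–Schwarz, with equality exactly when `z` is the
normalization of the restriction `x_s`. So a projection is the normalization of an `x_s` whose norm
is maximal among all `s` with `r` elements, and an exchange argument shows that these are the sets
of the `r` largest entries of `x` in absolute value.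
-/

section TopSet

variable {ι M : Type*}

/-- `IsTopSet f s` says that `s` consists of the indices of the `s.card` largest values of `f`, with
ties broken arbitrarily: no value outside `s` exceeds a value inside `s`. -/
def IsTopSet [LE M] (f : ι → M) (s : Finset ι) : Prop :=
  ∀ i ∈ s, ∀ j ∉ s, f j ≤ f i

variable [AddCommMonoid M] [PartialOrder M] [IsOrderedCancelAddMonoid M]
  {f : ι → M} {s t : Finset ι}

theorem IsTopSet.sum_le_sum_of_card_eq (hs : IsTopSet f s) (hcard : t.card = s.card) :
    ∑ i ∈ t, f i ≤ ∑ i ∈ s, f i := by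
  classical
  let e : ↥(t \ s) ≃ ↥(s \ t) := Finset.equivOfCardEq (Finset.card_sdiff_comm hcard)
  refine Finset.sum_sdiff_le_sum_sdiff.1 ?_
  calc
    ∑ i ∈ t \ s, f i = ∑ i : ↥(t \ s), f i := (Finset.sum_coe_sort _ f).symm
    _ ≤ ∑ i : ↥(t \ s), f (e i) := Finset.sum_le_sum fun i _ =>
      hs (e i) (Finset.mem_sdiff.1 (e i).2).1 i (Finset.mem_sdiff.1 i.2).2
    _ = ∑ j : ↥(s \ t), f j := e.sum_comp fun j => f j
    _ = ∑ j ∈ s \ t, f j := Finset.sum_coe_sort _ f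

theorem isTopSet_of_forall_sum_le_sum
    (h : ∀ t : Finset ι, t.card = s.card → ∑ i ∈ t, f i ≤ ∑ i ∈ s, f i) : IsTopSet f s := by
  classical
  intro i hi j hj
  have hj' : j ∉ s.erase i := fun h => hj (Finset.mem_of_mem_erase h)
  have hexchange : ∑ k ∈ insert j (s.erase i), f k ≤ ∑ k ∈ s, f k :=
    h _ (by rw [Finset.card_insert_of_notMem hj', Finset.card_erase_add_one hi])
  rw [Finset.sum_insert hj', ← Finset.add_sum_erase s f hi] at hexchange
  exact le_of_add_le_add_right hexchange

theorem isTopSet_iff_forall_sum_le_sum :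
    IsTopSet f s ↔ ∀ t : Finset ι, t.card = s.card → ∑ i ∈ t, f i ≤ ∑ i ∈ s, f i :=
  ⟨fun hs _ => hs.sum_le_sum_of_card_eq, isTopSet_of_forall_sum_le_sum⟩

end TopSet

section InnerProductSpace

variable {E : Type*} [NormedAddCommGroup E] [InnerProductSpace ℝ E] {w x y z : E}

theorem norm_sub_le_norm_sub_iff_inner_le_inner (h : ‖z‖ = ‖w‖) :
    ‖z - x‖ ≤ ‖w - x‖ ↔ ⟪w, x⟫ ≤ ⟪z, x⟫ := by
  rw [← sq_le_sq₀ (norm_nonneg _) (norm_nonneg _), norm_sub_sq_real, norm_sub_sq_real, h]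
  constructor <;> intro _ <;> linarith

theorem inner_eq_norm_iff_inv_norm_smul_eq (hz : ‖z‖ = 1) (hy : y ≠ 0) :
    ⟪z, y⟫ = ‖y‖ ↔ ‖y‖⁻¹ • y = z := by
  simpa [hz, inv_smul_eq_iff₀ (norm_ne_zero_iff.2 hy), eq_comm] using
    inner_eq_norm_mul_iff_real (x := z) (y := y)

end InnerProductSpace

section CoordRestrict

variable {𝕜 ι : Type*} [RCLike 𝕜] [DecidableEq ι] {s : Finset ι}

/-- The vector that agrees with `x` on the coordinates in `s` and vanishes elsewhere, `x_s` in
the argument above. It is again a vector indexed by `ι`, not by `s`. -/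
def coordRestrict (s : Finset ι) (x : EuclideanSpace 𝕜 ι) : EuclideanSpace 𝕜 ι :=
  WithLp.toLp 2 (s.piecewise x 0)

theorem coordRestrict_apply (s : Finset ι) (x : EuclideanSpace 𝕜 ι) (i : ι) :
    coordRestrict s x i = if i ∈ s then x i else 0 := rfl

theorem coordRestrict_eq_iff {x y : EuclideanSpace 𝕜 ι} :
    coordRestrict s x = y ↔ (∀ i ∈ s, y i = x i) ∧ ∀ i ∉ s, y i = 0 := by
  constructor
  · rintro rfl
    exact ⟨fun i hi => by simp [coordRestrict_apply, hi],
      fun i hi => by simp [coordRestrict_apply, hi]⟩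
  · rintro ⟨hin, hout⟩
    ext i
    by_cases hi : i ∈ s
    · rw [coordRestrict_apply, if_pos hi, hin i hi]
    · rw [coordRestrict_apply, if_neg hi, hout i hi]

theorem IsTopSet.coordRestrict_ne_zero {x : EuclideanSpace 𝕜 ι}
    (hs : IsTopSet (fun i => ‖x i‖) s) (hne : s.Nonempty) (hx : x ≠ 0) :
    coordRestrict s x ≠ 0 := by
  intro hzero
  have hin : ∀ i ∈ s, x i = 0 := fun i hi => ((coordRestrict_eq_iff.1 hzero).1 i hi).symm
  obtain ⟨m, hm⟩ := hne
  refine hx (PiLp.ext fun j => ?_)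
  by_cases hj : j ∈ s
  · exact hin j hj
  · exact norm_le_zero_iff.1 (by simpa [hin m hm] using hs m hm j hj)

variable [Fintype ι]

theorem norm_sq_coordRestrict (s : Finset ι) (x : EuclideanSpace 𝕜 ι) :
    ‖coordRestrict s x‖ ^ 2 = ∑ i ∈ s, ‖x i‖ ^ 2 := by
  simp [EuclideanSpace.norm_sq_eq, coordRestrict_apply, apply_ite norm, ite_pow]

theorem inner_coordRestrict {z : EuclideanSpace 𝕜 ι} (hz : ∀ i ∉ s, z i = 0)
    (x : EuclideanSpace 𝕜 ι) : inner 𝕜 z (coordRestrict s x) = inner 𝕜 z x := by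
  simp only [PiLp.inner_apply]
  refine Finset.sum_congr rfl fun i _ => ?_
  by_cases hi : i ∈ s
  · rw [coordRestrict_apply, if_pos hi]
  · rw [hz i hi, inner_zero_left, inner_zero_left]

theorem isTopSet_norm_iff_forall_norm_coordRestrict_le {x : EuclideanSpace 𝕜 ι} :
    IsTopSet (fun i => ‖x i‖) s ↔
      ∀ t : Finset ι, t.card = s.card → ‖coordRestrict t x‖ ≤ ‖coordRestrict s x‖ := by
  have hsq : IsTopSet (fun i => ‖x i‖) s ↔ IsTopSet (fun i => ‖x i‖ ^ 2) s := by
    simp only [IsTopSet, sq_le_sq₀ (norm_nonneg _) (norm_nonneg _)]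
  simp only [hsq, isTopSet_iff_forall_sum_le_sum, ← norm_sq_coordRestrict,
    sq_le_sq₀ (norm_nonneg _) (norm_nonneg _)]

theorem inner_le_norm_coordRestrict {z : EuclideanSpace ℝ ι} (hz : ∀ i ∉ s, z i = 0)
    (hnorm : ‖z‖ = 1) (x : EuclideanSpace ℝ ι) : ⟪z, x⟫ ≤ ‖coordRestrict s x‖ := by
  rw [← inner_coordRestrict hz]
  simpa [hnorm] using real_inner_le_norm z (coordRestrict s x)

theorem inner_eq_norm_coordRestrict_iff {x z : EuclideanSpace ℝ ι} (hz : ∀ i ∉ s, z i = 0)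
    (hnorm : ‖z‖ = 1) (hx : coordRestrict s x ≠ 0) :
    ⟪z, x⟫ = ‖coordRestrict s x‖ ↔ ‖coordRestrict s x‖⁻¹ • coordRestrict s x = z := by
  rw [← inner_coordRestrict hz, inner_eq_norm_iff_inv_norm_smul_eq hnorm hx]

theorem inner_inv_norm_smul_coordRestrict {x : EuclideanSpace ℝ ι} (hx : coordRestrict s x ≠ 0) :
    ⟪‖coordRestrict s x‖⁻¹ • coordRestrict s x, x⟫ = ‖coordRestrict s x‖ :=
  (inner_eq_norm_coordRestrict_iff (fun i hi => by simp [coordRestrict_apply, hi])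
    (norm_smul_inv_norm (𝕜 := ℝ) hx) hx).2 rfl

end CoordRestrict

section SparseSphere

variable {n r : ℕ} {s : Finset (Fin n)} {x y z : EuclideanSpace ℝ (Fin n)}

theorem suppF_subset_iff : suppF z ⊆ s ↔ ∀ i ∉ s, z i = 0 := by
  simp only [suppF, Finset.subset_iff, Finset.mem_filter_univ, not_imp_comm, ne_eq]

theorem exists_card_eq_of_mem_sphC (hrn : r ≤ n) (hz : z ∈ sphC n r) :
    ∃ s : Finset (Fin n), s.card = r ∧ ∀ i ∉ s, z i = 0 := by
  obtain ⟨s, hsupp, hcard⟩ := Finset.exists_superset_card_eq hz.1 (by simpa using hrn)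
  exact ⟨s, hcard, suppF_subset_iff.1 hsupp⟩

theorem neg_mem_sphC (hz : z ∈ sphC n r) : -z ∈ sphC n r := by
  simpa [sphC, suppF] using hz

theorem inv_norm_smul_coordRestrict_mem_sphC (hcard : s.card ≤ r) (hx : coordRestrict s x ≠ 0) :
    ‖coordRestrict s x‖⁻¹ • coordRestrict s x ∈ sphC n r := by
  have hsupp : suppF (‖coordRestrict s x‖⁻¹ • coordRestrict s x) ⊆ s :=
    suppF_subset_iff.2 fun i hi => by simp [coordRestrict_apply, hi]
  exact ⟨(Finset.card_le_card hsupp).trans hcard, norm_smul_inv_norm (𝕜 := ℝ) hx⟩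

theorem mem_Tr_iff : y ∈ Tr r x ↔
    ∃ s : Finset (Fin n), s.card = r ∧ IsTopSet (fun i => ‖x i‖) s ∧ coordRestrict s x = y := by
  simp only [Tr, Set.mem_ofPred_eq, IsTopSet, Real.norm_eq_abs, coordRestrict_eq_iff]

theorem ne_zero_of_mem_Tr (hr : 1 ≤ r) (hx : x ≠ 0) (hy : y ∈ Tr r x) : y ≠ 0 := by
  obtain ⟨s, rfl, htop, rfl⟩ := mem_Tr_iff.1 hy
  exact htop.coordRestrict_ne_zero (Finset.card_pos.1 hr) hx

theorem mem_projC_iff_forall_inner_le :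
    z ∈ projC r x ↔ z ∈ sphC n r ∧ ∀ w ∈ sphC n r, ⟪w, x⟫ ≤ ⟪z, x⟫ :=
  and_congr_right fun hz => forall₂_congr fun _ hw =>
    norm_sub_le_norm_sub_iff_inner_le_inner (hz.2.trans hw.2.symm)

theorem projC_zero : projC r (0 : EuclideanSpace ℝ (Fin n)) = sphC n r := by
  ext z
  simp [mem_projC_iff_forall_inner_le]

theorem norm_coordRestrict_le_inner_of_mem_projC (hz : z ∈ projC r x) (hcard : s.card ≤ r) :
    ‖coordRestrict s x‖ ≤ ⟪z, x⟫ := by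
  obtain ⟨hzC, hmax⟩ := mem_projC_iff_forall_inner_le.1 hz
  by_cases hxs : coordRestrict s x = 0
  · have hneg : -⟪z, x⟫ ≤ ⟪z, x⟫ := by simpa using hmax (-z) (neg_mem_sphC hzC)
    rw [hxs, norm_zero]
    linarith
  · rw [← inner_inv_norm_smul_coordRestrict hxs]
    exact hmax _ (inv_norm_smul_coordRestrict_mem_sphC hcard hxs)

theorem inv_norm_smul_mem_projC_of_mem_Tr (hrn : r ≤ n) (hy : y ∈ Tr r x) (hy₀ : y ≠ 0) :
    ‖y‖⁻¹ • y ∈ projC r x := by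
  obtain ⟨s, hs, htop, rfl⟩ := mem_Tr_iff.1 hy
  refine mem_projC_iff_forall_inner_le.2
    ⟨inv_norm_smul_coordRestrict_mem_sphC hs.le hy₀, fun w hw => ?_⟩
  obtain ⟨t, ht, hwt⟩ := exists_card_eq_of_mem_sphC hrn hw
  calc
    ⟪w, x⟫ ≤ ‖coordRestrict t x‖ := inner_le_norm_coordRestrict hwt hw.2 x
    _ ≤ ‖coordRestrict s x‖ :=
      isTopSet_norm_iff_forall_norm_coordRestrict_le.1 htop t (ht.trans hs.symm)
    _ = ⟪‖coordRestrict s x‖⁻¹ • coordRestrict s x, x⟫ :=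
      (inner_inv_norm_smul_coordRestrict hy₀).symm

theorem exists_mem_Tr_of_mem_projC (hr : 1 ≤ r) (hrn : r ≤ n) (hx : x ≠ 0) (hz : z ∈ projC r x) :
    ∃ y ∈ Tr r x, ‖y‖⁻¹ • y = z := by
  obtain ⟨s, rfl, hzs⟩ := exists_card_eq_of_mem_sphC hrn hz.1
  have hle : ⟪z, x⟫ ≤ ‖coordRestrict s x‖ := inner_le_norm_coordRestrict hzs hz.1.2 x
  have htop : IsTopSet (fun i => ‖x i‖) s :=
    isTopSet_norm_iff_forall_norm_coordRestrict_le.2 fun t ht =>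
      (norm_coordRestrict_le_inner_of_mem_projC hz ht.le).trans hle
  have hy : coordRestrict s x ∈ Tr s.card x := mem_Tr_iff.2 ⟨s, rfl, htop, rfl⟩
  have heq : ⟪z, x⟫ = ‖coordRestrict s x‖ :=
    hle.antisymm (norm_coordRestrict_le_inner_of_mem_projC hz le_rfl)
  exact ⟨_, hy, (inner_eq_norm_coordRestrict_iff hzs hz.1.2 (ne_zero_of_mem_Tr hr hx hy)).1 heq⟩

end SparseSphere

/-- Proposition 6.3: closed form of the projection onto the sparse unit sphere C. -/
theorem projection_onto_sparse_sphere
    {n : ℕ} (r : ℕ) (hr1 : 1 ≤ r) (hrn : r ≤ n) :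
    (∀ x : EuclideanSpace ℝ (Fin n), x ≠ 0 →
      (∀ y ∈ Tr r x, y ≠ 0) ∧ projC r x = (fun y => ‖y‖⁻¹ • y) '' Tr r x) ∧
    projC r (0 : EuclideanSpace ℝ (Fin n)) = sphC n r := by
  refine ⟨fun x hx => ⟨fun y hy => ne_zero_of_mem_Tr hr1 hx hy, ?_⟩, projC_zero⟩
  refine Set.Subset.antisymm (fun z hz => exists_mem_Tr_of_mem_projC hr1 hrn hx hz) ?_
  rintro _ ⟨y, hy, rfl⟩
  exact inv_norm_smul_mem_projC_of_mem_Tr hrn hy (ne_zero_of_mem_Tr hr1 hx hy)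
end
end

section
/- Let m ≥ 1, let λ₁,…,λ_m ≥ 0 be real numbers, let Σ := diag(λ₁,…,λ_m), and fix j ∈ {1,…,m} such that λ_i ≠ λ_j for at least one i. Set d₁ := (1/2)·min{|λ_i − λ_j| : 1 ≤ i ≤ m, λ_i ≠ λ_j}. Then for every z ∈ ℝᵐ with ‖z‖₂ = 1 and 0 < zᵀ(λ_j·I − Σ)z < d₁, one has zᵀΣ²z − (zᵀΣz)² ≥ d₁·zᵀ(λ_j·I − Σ)z. -/
open Filter Topology

noncomputable section

/-!
Regard the `z i ^ 2` as probability weights, so that the right-hand side is the variance of `lam`.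
With `S` the mean of `lam j - lam i`, that variance is the second moment of `lam j - lam i` minus
`S ^ 2`. A nonzero deviation from `lam j` has absolute value at least `2 * d₁`, so the second moment
is at least `2 * d₁ * S`, and `2 * d₁ * S - S ^ 2 ≥ d₁ * S` when `0 ≤ S ≤ d₁`. For `S ≤ 0`
the left-hand side is nonpositive and the variance is not negative.
-/

theorem mul_le_sq_of_le_abs {R : Type*} [CommRing R] [LinearOrder R] [IsStrictOrderedRing R]
    {a x : R} (ha : 0 ≤ a) (hx : x ≠ 0 → a ≤ |x|) : a * x ≤ x ^ 2 := by
  rcases eq_or_ne x 0 with rfl | hx0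
  · simp
  calc a * x ≤ a * |x| := mul_le_mul_of_nonneg_left (le_abs_self x) ha
    _ ≤ |x| * |x| := mul_le_mul_of_nonneg_right (hx hx0) (abs_nonneg x)
    _ = x ^ 2 := by rw [abs_mul_abs_self, sq]

theorem sInf_abs_sub_le {ι : Type*} {f : ι → ℝ} {c : ℝ} {i : ι} (hi : f i ≠ c) :
    sInf {t : ℝ | ∃ i, f i ≠ c ∧ t = |f i - c|} ≤ |f i - c| := by
  refine csInf_le ⟨0, ?_⟩ ⟨i, hi, rfl⟩
  rintro _ ⟨k, -, rfl⟩
  exact abs_nonneg _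

section WeightedSums

variable {ι R : Type*} {s : Finset ι}

theorem weighted_variance_const_sub [CommRing R] {w : ι → R} (hw : ∑ i ∈ s, w i = 1)
    (f : ι → R) (c : R) :
    ∑ i ∈ s, (c - f i) ^ 2 * w i - (∑ i ∈ s, (c - f i) * w i) ^ 2 =
      ∑ i ∈ s, f i ^ 2 * w i - (∑ i ∈ s, f i * w i) ^ 2 := by
  have mean_eq : ∑ i ∈ s, (c - f i) * w i = c - ∑ i ∈ s, f i * w i := by
    simp only [sub_mul, Finset.sum_sub_distrib, ← Finset.mul_sum, hw, mul_one]
  have second_moment_eq : ∑ i ∈ s, (c - f i) ^ 2 * w i =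
      c ^ 2 - 2 * c * ∑ i ∈ s, f i * w i + ∑ i ∈ s, f i ^ 2 * w i := by
    simp only [sub_sq, sub_mul, add_mul, Finset.sum_add_distrib, Finset.sum_sub_distrib,
      mul_assoc, ← Finset.mul_sum, hw, mul_one]
  rw [mean_eq, second_moment_eq]
  ring

variable [CommRing R] [LinearOrder R] [IsStrictOrderedRing R] {w f : ι → R}

theorem weighted_variance_nonneg (hw_nonneg : ∀ i ∈ s, 0 ≤ w i) (hw : ∑ i ∈ s, w i = 1) :
    0 ≤ ∑ i ∈ s, f i ^ 2 * w i - (∑ i ∈ s, f i * w i) ^ 2 := by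
  have cauchy_schwarz :
      (∑ i ∈ s, f i * w i) ^ 2 ≤ (∑ i ∈ s, f i ^ 2 * w i) * ∑ i ∈ s, w i :=
    Finset.sum_sq_le_sum_mul_sum_of_sq_le_mul s
      (fun i hi ↦ mul_nonneg (sq_nonneg _) (hw_nonneg i hi)) hw_nonneg
      (fun i _ ↦ le_of_eq (by ring))
  rwa [hw, mul_one, ← sub_nonneg] at cauchy_schwarz

theorem mul_weighted_sum_le_weighted_sum_sq {a : R} (ha : 0 ≤ a)
    (hf : ∀ i ∈ s, f i ≠ 0 → a ≤ |f i|) (hw_nonneg : ∀ i ∈ s, 0 ≤ w i) :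
    a * ∑ i ∈ s, f i * w i ≤ ∑ i ∈ s, f i ^ 2 * w i := by
  rw [Finset.mul_sum]
  refine Finset.sum_le_sum fun i hi ↦ ?_
  rw [← mul_assoc]
  exact mul_le_mul_of_nonneg_right (mul_le_sq_of_le_abs ha (hf i hi)) (hw_nonneg i hi)

theorem key_quadratic_inequality_for_KL_general {c d : R} (hd : 0 ≤ d)
    (hgap : ∀ i ∈ s, f i ≠ c → 2 * d ≤ |f i - c|)
    (hw_nonneg : ∀ i ∈ s, 0 ≤ w i) (hw : ∑ i ∈ s, w i = 1)
    (hle : ∑ i ∈ s, (c - f i) * w i ≤ d) :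
    d * ∑ i ∈ s, (c - f i) * w i ≤
      ∑ i ∈ s, f i ^ 2 * w i - (∑ i ∈ s, f i * w i) ^ 2 := by
  rcases le_total (∑ i ∈ s, (c - f i) * w i) 0 with hS | hS
  · exact (mul_nonpos_of_nonneg_of_nonpos hd hS).trans (weighted_variance_nonneg hw_nonneg hw)
  rw [← weighted_variance_const_sub hw f c]
  have second_moment_ge :
      2 * d * ∑ i ∈ s, (c - f i) * w i ≤ ∑ i ∈ s, (c - f i) ^ 2 * w i := by
    refine mul_weighted_sum_le_weighted_sum_sq (by positivity) (fun i hi hne ↦ ?_) hw_nonneg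
    rw [abs_sub_comm]
    exact hgap i hi (sub_ne_zero.mp hne).symm
  linarith [mul_le_mul_of_nonneg_right hle hS]

end WeightedSums

/-- Equation (5.12): the key quadratic inequality used to establish the KL exponent 1/2
for the generalized Rayleigh quotient. -/
theorem key_quadratic_inequality_for_KL
    {m : ℕ} (hm : 1 ≤ m)
    (lam : Fin m → ℝ) (hlam : ∀ i, 0 ≤ lam i)
    (j : Fin m) (hne : ∃ i, lam i ≠ lam j)
    (d₁ : ℝ)
    (hd₁ : d₁ = (1 / 2) * sInf {t : ℝ | ∃ i, lam i ≠ lam j ∧ t = |lam i - lam j|})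
    (z : EuclideanSpace ℝ (Fin m)) (hz : ‖z‖ = 1)
    (hpos : 0 < ∑ i, (lam j - lam i) * z i ^ 2)
    (hlt : ∑ i, (lam j - lam i) * z i ^ 2 < d₁) :
    d₁ * ∑ i, (lam j - lam i) * z i ^ 2 ≤
      (∑ i, lam i ^ 2 * z i ^ 2) - (∑ i, lam i * z i ^ 2) ^ 2 :=
  key_quadratic_inequality_for_KL_general (hpos.trans hlt).le
    (fun _ _ hi ↦ by linarith [sInf_abs_sub_le hi]) (fun i _ ↦ sq_nonneg (z i))
    (by rw [← EuclideanSpace.real_norm_sq_eq, hz, one_pow]) hlt.le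
end
end
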